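/- arXiv:0704.3091 — 3 statements merged into one kernel-verified Lean document; each statement's English description precedes it below -/
import Mathlib

section
/- Each of the four numbers a, b, c, d is a root of the polynomial 45x⁸ − 90x⁶ + 60x⁴ − 15x² + 1, i.e. 45a⁸ − 90a⁶ + 60a⁴ − 15a² + 1 = 0, and similarly for b, c, and d. -/
noncomputable section
open Real Complex

namespace Triacontagonal

/-- The golden ratio. -/
def τ : ℝ := (1 + Real.sqrt 5) / 2

/-- The constant 3^(-1/2) * 5^(-1/4). -/
def k0 : ℝ := (3 : ℝ) ^ (-(1:ℝ)/2) * (5 : ℝ) ^ (-(1:ℝ)/4)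

/-- `a` is the positive real with 2a² = 1 + 3^(-1/2)·5^(-1/4)·τ^(3/2). -/
def a : ℝ := Real.sqrt ((1 + k0 * τ ^ ((3:ℝ)/2)) / 2)

/-- `b` is the positive real with 2b² = 1 + 3^(-1/2)·5^(-1/4)·τ^(-3/2). -/
def b : ℝ := Real.sqrt ((1 + k0 * τ ^ (-((3:ℝ)/2))) / 2)

/-- `c` is the positive real with 2c² = 1 - 3^(-1/2)·5^(-1/4)·τ^(-3/2). -/
def c : ℝ := Real.sqrt ((1 - k0 * τ ^ (-((3:ℝ)/2))) / 2)

/-- `d` is the positive real with 2d² = 1 - 3^(-1/2)·5^(-1/4)·τ^(3/2). -/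
def d : ℝ := Real.sqrt ((1 - k0 * τ ^ ((3:ℝ)/2)) / 2)

/-!
Put `2x² = 1 + u`. Then `16 (45x⁸ - 90x⁶ + 60x⁴ - 15x² + 1) = 45u⁴ - 30u² + 1`, which is even in
`u`, so the pairs `a, d` and `b, c` are treated together. For `u = 3^(-1/2) 5^(-1/4) w` the quartic
becomes the palindromic `w⁴ - 2√5 w² + 1`, whose roots are closed under `w ↦ w⁻¹`; it vanishes at
`w = τ^(3/2)` because `τ³ = √5 + 2`.
-/

theorem sixteen_mul_octic_eq_quartic {R : Type*} [CommRing R] {x u : R} (h : 2 * x ^ 2 = 1 + u) :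
    16 * (45 * x ^ 8 - 90 * x ^ 6 + 60 * x ^ 4 - 15 * x ^ 2 + 1) = 45 * u ^ 4 - 30 * u ^ 2 + 1 := by
  obtain rfl : u = 2 * x ^ 2 - 1 := by rw [h, add_sub_cancel_left]
  ring

theorem abs_le_one_of_quartic_eq_zero {u : ℝ} (hu : 45 * u ^ 4 - 30 * u ^ 2 + 1 = 0) :
    |u| ≤ 1 := by
  rw [← sq_le_one_iff_abs_le_one]
  nlinarith

theorem octic_sqrt_half_one_add_eq_zero {u : ℝ} (hu : 45 * u ^ 4 - 30 * u ^ 2 + 1 = 0) :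
    45 * √((1 + u) / 2) ^ 8 - 90 * √((1 + u) / 2) ^ 6 + 60 * √((1 + u) / 2) ^ 4
      - 15 * √((1 + u) / 2) ^ 2 + 1 = 0 := by
  have radicand_nonneg : 0 ≤ (1 + u) / 2 := by
    linarith [neg_le_of_abs_le (abs_le_one_of_quartic_eq_zero hu)]
  have two_mul_sq : 2 * √((1 + u) / 2) ^ 2 = 1 + u := by
    rw [sq_sqrt radicand_nonneg, mul_div_cancel₀ _ two_ne_zero]
  linarith [sixteen_mul_octic_eq_quartic two_mul_sq]

theorem octic_sqrt_half_one_sub_eq_zero {u : ℝ} (hu : 45 * u ^ 4 - 30 * u ^ 2 + 1 = 0) :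
    45 * √((1 - u) / 2) ^ 8 - 90 * √((1 - u) / 2) ^ 6 + 60 * √((1 - u) / 2) ^ 4
      - 15 * √((1 - u) / 2) ^ 2 + 1 = 0 := by
  rw [sub_eq_add_neg 1 u]
  exact octic_sqrt_half_one_add_eq_zero (by rwa [even_two.neg_pow, Even.neg_pow (by decide)])

theorem palindromic_quartic_inv_eq_zero {K : Type*} [Field K] {s w : K} (hw : w ≠ 0)
    (h : w ^ 4 - s * w ^ 2 + 1 = 0) : w⁻¹ ^ 4 - s * w⁻¹ ^ 2 + 1 = 0 := by
  have reversal : w⁻¹ ^ 4 - s * w⁻¹ ^ 2 + 1 = (w ^ 4 - s * w ^ 2 + 1) / w ^ 4 := by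
    field_simp
    ring
  rw [reversal, h, zero_div]

theorem k0_sq : k0 ^ 2 = √5 / 15 := by
  have three_rpow_sq : ((3 : ℝ) ^ (-(1 : ℝ) / 2)) ^ 2 = 3⁻¹ := by
    rw [← rpow_mul_natCast (by norm_num), ← rpow_neg_one]
    norm_num
  have five_rpow_sq : ((5 : ℝ) ^ (-(1 : ℝ) / 4)) ^ 2 = √5 / 5 := by
    rw [sqrt_div_self, sqrt_eq_rpow, ← rpow_neg (by norm_num),
      ← rpow_mul_natCast (by norm_num)]
    norm_num
  rw [k0, mul_pow, three_rpow_sq, five_rpow_sq]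
  ring

theorem quartic_k0_mul (w : ℝ) :
    45 * (k0 * w) ^ 4 - 30 * (k0 * w) ^ 2 + 1 = w ^ 4 - 2 * √5 * w ^ 2 + 1 := by
  have k0_pow_four : k0 ^ 4 = 1 / 45 := by
    rw [show k0 ^ 4 = (k0 ^ 2) ^ 2 by ring, k0_sq, div_pow, sq_sqrt (by norm_num)]
    norm_num
  rw [mul_pow, mul_pow, k0_pow_four, k0_sq]
  ring

theorem τ_pos : 0 < τ := goldenRatio_pos

theorem τ_pow_three : τ ^ 3 = √5 + 2 := by
  have τ_sq : τ ^ 2 = τ + 1 := goldenRatio_sq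
  calc
    τ ^ 3 = 2 * τ + 1 := by linear_combination (τ + 1) * τ_sq
    _ = √5 + 2 := by rw [τ]; ring

theorem palindromic_quartic_τ_rpow_eq_zero :
    (τ ^ ((3 : ℝ) / 2)) ^ 4 - 2 * √5 * (τ ^ ((3 : ℝ) / 2)) ^ 2 + 1 = 0 := by
  have rpow_sq : (τ ^ ((3 : ℝ) / 2)) ^ 2 = √5 + 2 := by
    rw [← τ_pow_three, ← rpow_mul_natCast τ_pos.le, ← rpow_natCast]
    norm_num
  have sqrt_five_sq : √(5 : ℝ) ^ 2 = 5 := sq_sqrt (by norm_num)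
  linear_combination ((τ ^ ((3 : ℝ) / 2)) ^ 2 + 2 - √5) * rpow_sq - sqrt_five_sq

/-- each of a, b, c, d is a root of 45x⁸ − 90x⁶ + 60x⁴ − 15x² + 1. -/
theorem stmt0 :
    45 * a ^ 8 - 90 * a ^ 6 + 60 * a ^ 4 - 15 * a ^ 2 + 1 = 0 ∧
    45 * b ^ 8 - 90 * b ^ 6 + 60 * b ^ 4 - 15 * b ^ 2 + 1 = 0 ∧
    45 * c ^ 8 - 90 * c ^ 6 + 60 * c ^ 4 - 15 * c ^ 2 + 1 = 0 ∧
    45 * d ^ 8 - 90 * d ^ 6 + 60 * d ^ 4 - 15 * d ^ 2 + 1 = 0 := by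
  have quartic_pos :
      45 * (k0 * τ ^ ((3 : ℝ) / 2)) ^ 4 - 30 * (k0 * τ ^ ((3 : ℝ) / 2)) ^ 2 + 1 = 0 := by
    rw [quartic_k0_mul, palindromic_quartic_τ_rpow_eq_zero]
  have quartic_neg :
      45 * (k0 * τ ^ (-((3 : ℝ) / 2))) ^ 4 - 30 * (k0 * τ ^ (-((3 : ℝ) / 2))) ^ 2 + 1 = 0 := by
    rw [quartic_k0_mul, rpow_neg τ_pos.le]
    exact palindromic_quartic_inv_eq_zero (rpow_pos_of_pos τ_pos _).ne'
      palindromic_quartic_τ_rpow_eq_zero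
  exact ⟨octic_sqrt_half_one_add_eq_zero quartic_pos, octic_sqrt_half_one_add_eq_zero quartic_neg,
    octic_sqrt_half_one_sub_eq_zero quartic_neg, octic_sqrt_half_one_sub_eq_zero quartic_pos⟩

end Triacontagonal
end
end

section
/- The set S is closed under negation: if v ∈ S then −v ∈ S. -/
noncomputable section
open Real Complex

namespace Triacontagonal

/-- `cc n = 2 cos(nπ/30)`. -/
def cc (n : ℤ) : ℝ := 2 * Real.cos (n * Real.pi / 30)

/-- `ω = exp(iπ/30)`, a primitive 60th root of unity. -/
def ω : ℂ := Complex.exp (Real.pi * Complex.I / 30)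

def r1 : ℝ := a / cc 9
def r2 : ℝ := b / cc 9
def r3 : ℝ := c / cc 9
def r4 : ℝ := d / cc 9
def r5 : ℝ := a / cc 3
def r6 : ℝ := b / cc 3
def r7 : ℝ := c / cc 3
def r8 : ℝ := d / cc 3

/-- The eight cycles of 30 vectors each in ℂ⁴. -/
def A (n : Fin 30) : Fin 4 → ℂ :=
  ![(r1 : ℂ) * ω ^ (2 * (n : ℕ)), (r4 : ℂ) * ω ^ (22 * (n : ℕ)),
    (r6 : ℂ) * ω ^ (14 * (n : ℕ) + 1), (r7 : ℂ) * ω ^ (26 * (n : ℕ) + 1)]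

def B (n : Fin 30) : Fin 4 → ℂ :=
  ![(r2 : ℂ) * ω ^ (2 * (n : ℕ) + 29), (r3 : ℂ) * ω ^ (22 * (n : ℕ) + 19),
    -((r8 : ℂ) * ω ^ (14 * (n : ℕ) + 24)), -((r5 : ℂ) * ω ^ (26 * (n : ℕ) + 18))]

def C (n : Fin 30) : Fin 4 → ℂ :=
  ![(r3 : ℂ) * ω ^ (2 * (n : ℕ) + 29), -((r2 : ℂ) * ω ^ (22 * (n : ℕ) + 19)),
    (r5 : ℂ) * ω ^ (14 * (n : ℕ) + 24), -((r8 : ℂ) * ω ^ (26 * (n : ℕ) + 18))]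

def D (n : Fin 30) : Fin 4 → ℂ :=
  ![(r4 : ℂ) * ω ^ (2 * (n : ℕ)), -((r1 : ℂ) * ω ^ (22 * (n : ℕ))),
    (r7 : ℂ) * ω ^ (14 * (n : ℕ) + 1), -((r6 : ℂ) * ω ^ (26 * (n : ℕ) + 1))]

def E (n : Fin 30) : Fin 4 → ℂ :=
  ![(r5 : ℂ) * ω ^ (2 * (n : ℕ)), (r8 : ℂ) * ω ^ (22 * (n : ℕ)),
    -((r2 : ℂ) * ω ^ (14 * (n : ℕ) + 1)), -((r3 : ℂ) * ω ^ (26 * (n : ℕ) + 1))]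

def F (n : Fin 30) : Fin 4 → ℂ :=
  ![(r6 : ℂ) * ω ^ (2 * (n : ℕ) + 29), (r7 : ℂ) * ω ^ (22 * (n : ℕ) + 19),
    (r4 : ℂ) * ω ^ (14 * (n : ℕ) + 24), (r1 : ℂ) * ω ^ (26 * (n : ℕ) + 18)]

def G (n : Fin 30) : Fin 4 → ℂ :=
  ![(r7 : ℂ) * ω ^ (2 * (n : ℕ) + 29), -((r6 : ℂ) * ω ^ (22 * (n : ℕ) + 19)),
    -((r1 : ℂ) * ω ^ (14 * (n : ℕ) + 24)), (r4 : ℂ) * ω ^ (26 * (n : ℕ) + 18)]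

def H (n : Fin 30) : Fin 4 → ℂ :=
  ![(r8 : ℂ) * ω ^ (2 * (n : ℕ)), -((r5 : ℂ) * ω ^ (22 * (n : ℕ))),
    -((r3 : ℂ) * ω ^ (14 * (n : ℕ) + 1)), (r2 : ℂ) * ω ^ (26 * (n : ℕ) + 1)]

/-- The set of the 240 vectors. -/
def S : Set (Fin 4 → ℂ) :=
  {v | ∃ n : Fin 30, v = A n ∨ v = B n ∨ v = C n ∨ v = D n ∨
    v = E n ∨ v = F n ∨ v = G n ∨ v = H n}

/-- The real inner product on ℂ⁴: ⟨v,w⟩_ℝ = Re(Σᵢ vᵢ · conj(wᵢ)). -/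
def rinner (v w : Fin 4 → ℂ) : ℝ := (∑ i, v i * star (w i)).re

/-- The associated Euclidean norm. -/
def enorm (v : Fin 4 → ℂ) : ℝ := Real.sqrt (rinner v v)

/-! Multiplying the coordinates by `(ω², ω²², ω¹⁴, ω²⁶)` advances each of the eight cycles by one
step. These multipliers are `ω` raised to doubled odd numbers and `ω³⁰ = -1`, so fifteen steps
negate every vector: the negative of a vector is the opposite vertex of the same 30-cycle. -/

theorem pow_add_half_mod_eq_neg {M : Type*} [Monoid M] [HasDistribNeg M] {x : M} {h : ℕ}
    (hx : x ^ h = -1) (n : ℕ) : x ^ ((n + h) % (2 * h)) = -x ^ n := by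
  have hperiod : x ^ (2 * h) = 1 := by rw [mul_comm, pow_mul, hx, neg_one_sq]
  rw [← pow_eq_pow_mod _ hperiod, pow_add, hx, mul_neg_one]

theorem ω_pow_thirty : ω ^ 30 = -1 := by
  rw [ω, ← Complex.exp_nat_mul, ← Complex.exp_pi_mul_I]
  congr 1
  push_cast
  ring

theorem ω_pow_two_mul_pow_fifteen {j : ℕ} (hj : Odd j) : (ω ^ (2 * j)) ^ 15 = -1 := by
  calc (ω ^ (2 * j)) ^ 15 = (ω ^ 30) ^ j := by rw [← pow_mul, ← pow_mul]; congr 1; ring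
    _ = -1 := by rw [ω_pow_thirty, hj.neg_one_pow]

/-- The rotation of `ℂ⁴` by `2π/30` times `1, 11, 7, 13` in the four coordinates, encoded as the
vector of its multipliers, so that it acts by pointwise multiplication. -/
def rotation : Fin 4 → ℂ := ![ω ^ (2 * 1), ω ^ (2 * 11), ω ^ (2 * 7), ω ^ (2 * 13)]

theorem rotation_pow_fifteen : rotation ^ 15 = -1 := by
  ext i
  fin_cases i <;> exact ω_pow_two_mul_pow_fifteen (by decide)

/-- A family of 30 vectors is a rotation cycle if it lists the successive images of its first
member under `rotation`. -/
def IsRotationCycle (f : Fin 30 → Fin 4 → ℂ) : Prop :=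
  ∀ n, f n = f 0 * rotation ^ (n : ℕ)

theorem IsRotationCycle.apply_add_fifteen {f : Fin 30 → Fin 4 → ℂ} (hf : IsRotationCycle f)
    (n : Fin 30) : f (n + 15) = -f n := by
  have hpow : rotation ^ ((n + 15 : Fin 30) : ℕ) = -rotation ^ (n : ℕ) :=
    pow_add_half_mod_eq_neg rotation_pow_fifteen n
  rw [hf (n + 15), hf n, hpow, mul_neg]

theorem isRotationCycle_A : IsRotationCycle A := by
  intro n
  ext i
  fin_cases i <;> simp [A, rotation, pow_add, pow_mul, ← mul_assoc, mul_right_comm]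

theorem isRotationCycle_B : IsRotationCycle B := by
  intro n
  ext i
  fin_cases i <;> simp [B, rotation, pow_add, pow_mul, ← mul_assoc, mul_right_comm]

theorem isRotationCycle_C : IsRotationCycle C := by
  intro n
  ext i
  fin_cases i <;> simp [C, rotation, pow_add, pow_mul, ← mul_assoc, mul_right_comm]

theorem isRotationCycle_D : IsRotationCycle D := by
  intro n
  ext i
  fin_cases i <;> simp [D, rotation, pow_add, pow_mul, ← mul_assoc, mul_right_comm]

theorem isRotationCycle_E : IsRotationCycle E := by
  intro n
  ext i
  fin_cases i <;> simp [E, rotation, pow_add, pow_mul, ← mul_assoc, mul_right_comm]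

theorem isRotationCycle_F : IsRotationCycle F := by
  intro n
  ext i
  fin_cases i <;> simp [F, rotation, pow_add, pow_mul, ← mul_assoc, mul_right_comm]

theorem isRotationCycle_G : IsRotationCycle G := by
  intro n
  ext i
  fin_cases i <;> simp [G, rotation, pow_add, pow_mul, ← mul_assoc, mul_right_comm]

theorem isRotationCycle_H : IsRotationCycle H := by
  intro n
  ext i
  fin_cases i <;> simp [H, rotation, pow_add, pow_mul, ← mul_assoc, mul_right_comm]

/-- S is closed under negation. -/
theorem stmt7 : ∀ v ∈ S, -v ∈ S := by
  rintro v ⟨n, hv⟩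
  refine ⟨n + 15, ?_⟩
  simpa only [isRotationCycle_A.apply_add_fifteen, isRotationCycle_B.apply_add_fifteen,
    isRotationCycle_C.apply_add_fifteen, isRotationCycle_D.apply_add_fifteen,
    isRotationCycle_E.apply_add_fifteen, isRotationCycle_F.apply_add_fifteen,
    isRotationCycle_G.apply_add_fifteen, isRotationCycle_H.apply_add_fifteen, neg_inj] using hv

end Triacontagonal
end
end

section
/- For each fixed n ∈ {0,…,29}, the eight vectors Aₙ, Bₙ, Cₙ, Dₙ, Eₙ, Fₙ, Gₙ, Hₙ are linearly independent over ℝ, hence form a basis of ℂ⁴ regarded as an 8-dimensional real vector space. In particular S spans ℂ⁴ over ℝ. -/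
noncomputable section
open Real Complex

namespace Triacontagonal

/-!
In coordinate `i` the vectors `A, D, E, H` are real multiples of one unit complex number `u i`, and
`B, C, F, G` are real multiples of another one, `v i`, where `v i / u i` is a non-real power of `ω`.
Thus `u i, v i` is a real basis of `ℂ`, and the eight vectors are independent as soon as the two
`4 × 4` real matrices of signed radii are nonsingular. Each of these is the product of a `2 × 2`
similarity matrix in `1 / cc 9, 1 / cc 3`, acting on pairs of rows, and a block diagonal of two
`2 × 2` similarity matrices, in `a, d` and in `b, c`; so up to sign its determinant is
`((1 / cc 9)² + (1 / cc 3)²)² (a² + d²) (b² + c²)`.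
-/

section LinearAlgebra

theorem linearIndependent_sumElim_smul {R V ι κ κ' : Type*} [Ring R] [AddCommGroup V] [Module R V]
    {u v : ι → V} (huv : ∀ i, LinearIndependent R ![u i, v i])
    {x : κ → ι → R} (hx : LinearIndependent R x) {y : κ' → ι → R} (hy : LinearIndependent R y) :
    LinearIndependent R (Sum.elim (fun j i => x j i • u i) (fun j i => y j i • v i)) := by
  let combine : (ι → R) × (ι → R) →ₗ[R] ι → V :=
    LinearMap.pi fun i =>
      (LinearMap.toSpanSingleton R V (u i) ∘ₗ LinearMap.proj i).coprod
        (LinearMap.toSpanSingleton R V (v i) ∘ₗ LinearMap.proj i)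
  have combine_apply (s t : ι → R) (i : ι) : combine (s, t) i = s i • u i + t i • v i := rfl
  have ker_combine : LinearMap.ker combine = ⊥ := by
    rw [LinearMap.ker_eq_bot']
    rintro ⟨s, t⟩ hst
    have coeff_eq_zero (i : ι) : s i = 0 ∧ t i = 0 :=
      LinearIndependent.pair_iff.1 (huv i) _ _ (by rw [← combine_apply, hst, Pi.zero_apply])
    exact Prod.ext (funext fun i => (coeff_eq_zero i).1) (funext fun i => (coeff_eq_zero i).2)
  have sumElim_eq : Sum.elim (fun j i => x j i • u i) (fun j i => y j i • v i) =
      combine ∘ Sum.elim (LinearMap.inl R (ι → R) (ι → R) ∘ x) (LinearMap.inr R _ _ ∘ y) := by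
    ext j i
    cases j <;> simp [combine_apply]
  rw [sumElim_eq]
  exact (linearIndependent_inl_union_inr' hx hy).map' combine ker_combine

open scoped Kronecker in
theorem det_fromBlocks_smul_one {R m : Type*} [CommRing R] [Fintype m] [DecidableEq m]
    (p q r s : R) :
    (Matrix.fromBlocks (p • 1) (q • 1) (r • 1) (s • 1) : Matrix (m ⊕ m) (m ⊕ m) R).det =
      (p * s - q * r) ^ Fintype.card m := by
  let e : m ⊕ m ≃ Fin 2 × m :=
    (Equiv.boolProdEquivSum m).symm.trans (finTwoEquiv.symm.prodCongr (Equiv.refl m))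
  have fromBlocks_eq_kronecker :
      (Matrix.fromBlocks (p • 1) (q • 1) (r • 1) (s • 1) : Matrix (m ⊕ m) (m ⊕ m) R) =
        (!![p, q; r, s] ⊗ₖ (1 : Matrix m m R)).submatrix e e := by
    ext (i | i) (j | j) <;> simp [e, finTwoEquiv]
  rw [fromBlocks_eq_kronecker, Matrix.det_submatrix_equiv_self, Matrix.det_kronecker,
    Matrix.det_fin_two_of, Matrix.det_one, one_pow, mul_one]

theorem det_fromBlocks_smul {R m : Type*} [CommRing R] [Fintype m] [DecidableEq m]
    (p q r s : R) (X Y : Matrix m m R) :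
    (Matrix.fromBlocks (p • X) (q • Y) (r • X) (s • Y)).det =
      (p * s - q * r) ^ Fintype.card m * X.det * Y.det := by
  have fromBlocks_eq_mul : Matrix.fromBlocks (p • X) (q • Y) (r • X) (s • Y) =
      Matrix.fromBlocks (p • 1) (q • 1) (r • 1) (s • 1) * Matrix.fromBlocks X 0 0 Y := by
    simp [Matrix.fromBlocks_multiply]
  rw [fromBlocks_eq_mul, Matrix.det_mul, det_fromBlocks_smul_one, Matrix.det_fromBlocks_zero₁₂,
    mul_assoc]

end LinearAlgebra

section Phases

theorem linearIndependent_pair_mul_of_im_ne_zero {z w : ℂ} (hz : z ≠ 0) (hw : w.im ≠ 0) :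
    LinearIndependent ℝ ![z, z * w] := by
  rw [LinearIndependent.pair_iff]
  intro s t hst
  have hsum : (s : ℂ) + t * w = 0 := by
    refine (mul_eq_zero.1 ?_).resolve_left hz
    rw [← hst, real_smul, real_smul]
    ring
  have ht : t = 0 := by simpa [hw] using congrArg Complex.im hsum
  exact ⟨by simpa [ht] using hsum, ht⟩

theorem omega_pow_im (k : ℕ) : (ω ^ k).im = Real.sin (k * π / 30) := by
  have hω : ω ^ k = Complex.exp ((k * π / 30 : ℝ) * I) := by
    rw [ω, ← Complex.exp_nat_mul]
    congr 1
    push_cast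
    ring
  rw [hω, exp_ofReal_mul_I_im]

theorem omega_pow_im_pos {k : ℕ} (hk : 0 < k) (hk' : k < 30) : 0 < (ω ^ k).im := by
  have hk₀ : (0 : ℝ) < k := by exact_mod_cast hk
  have hk₁ : (k : ℝ) < 30 := by exact_mod_cast hk'
  rw [omega_pow_im]
  exact Real.sin_pos_of_pos_of_lt_pi (div_pos (mul_pos hk₀ Real.pi_pos) (by norm_num))
    (by nlinarith [Real.pi_pos])

theorem linearIndependent_omega_pow_pair (m : ℕ) {k : ℕ} (hk : 0 < k) (hk' : k < 30) :
    LinearIndependent ℝ ![ω ^ m, ω ^ (m + k)] := by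
  rw [pow_add]
  exact linearIndependent_pair_mul_of_im_ne_zero (pow_ne_zero m (Complex.exp_ne_zero _))
    (omega_pow_im_pos hk hk').ne'

/-- The unit complex numbers of which the coordinates of `A n, D n, E n, H n` are real multiples. -/
def phaseADEH (n : ℕ) : Fin 4 → ℂ :=
  ![ω ^ (2 * n), ω ^ (22 * n), ω ^ (14 * n + 1), ω ^ (26 * n + 1)]

/-- The unit complex numbers of which the coordinates of `B n, C n, F n, G n` are real multiples. -/
def phaseBCFG (n : ℕ) : Fin 4 → ℂ :=
  ![ω ^ (2 * n + 29), ω ^ (22 * n + 19), ω ^ (14 * n + 24), ω ^ (26 * n + 18)]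

theorem linearIndependent_phases (n : ℕ) (i : Fin 4) :
    LinearIndependent ℝ ![phaseADEH n i, phaseBCFG n i] := by
  fin_cases i
  · exact linearIndependent_omega_pow_pair (2 * n) (k := 29) (by norm_num) (by norm_num)
  · exact linearIndependent_omega_pow_pair (22 * n) (k := 19) (by norm_num) (by norm_num)
  · exact linearIndependent_omega_pow_pair (14 * n + 1) (k := 23) (by norm_num) (by norm_num)
  · exact linearIndependent_omega_pow_pair (26 * n + 1) (k := 17) (by norm_num) (by norm_num)

end Phases

section Radii

theorem a_pos : 0 < a := by
  unfold a k0 τ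
  positivity

theorem b_pos : 0 < b := by
  unfold b k0 τ
  positivity

theorem cc_pos {m : ℤ} (hm : |m| < 15) : 0 < cc m := by
  obtain ⟨hm₀, hm₁⟩ := abs_lt.1 hm
  have hm₀' : (-15 : ℝ) < m := by exact_mod_cast hm₀
  have hm₁' : (m : ℝ) < 15 := by exact_mod_cast hm₁
  have hcos : 0 < Real.cos (m * π / 30) :=
    Real.cos_pos_of_mem_Ioo ⟨by nlinarith [Real.pi_pos], by nlinarith [Real.pi_pos]⟩
  exact mul_pos two_pos hcos

/-- The signed radii of `A n, D n, E n, H n`, one vector per row: their coordinates relative to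
`phaseADEH n`. -/
def radiiADEH : Matrix (Fin 4) (Fin 4) ℝ :=
  !![r1, r4, r6, r7;
     r4, -r1, r7, -r6;
     r5, r8, -r2, -r3;
     r8, -r5, -r3, r2]

/-- The signed radii of `B n, C n, F n, G n`, one vector per row: their coordinates relative to
`phaseBCFG n`. -/
def radiiBCFG : Matrix (Fin 4) (Fin 4) ℝ :=
  !![r2, r3, -r8, -r5;
     r3, -r2, r5, -r8;
     r6, r7, r4, r1;
     r7, -r6, -r1, r4]

/-- The splitting of `Fin 4` into its first and last two indices, through which a `4 × 4` matrix
is viewed as a `2 × 2` matrix of `2 × 2` blocks. -/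
def blockIndex : Fin 2 ⊕ Fin 2 ≃ Fin 4 := finSumFinEquiv

theorem radiiADEH_submatrix_blockIndex :
    radiiADEH.submatrix blockIndex blockIndex =
      Matrix.fromBlocks
        ((cc 9)⁻¹ • !![a, d; d, -a]) ((cc 3)⁻¹ • !![b, c; c, -b])
        ((cc 3)⁻¹ • !![a, d; d, -a]) ((-(cc 9)⁻¹) • !![b, c; c, -b]) := by
  ext (i | i) (j | j) <;> fin_cases i <;> fin_cases j <;>
    simp [radiiADEH, r1, r2, r3, r4, r5, r6, r7, r8, div_eq_inv_mul, blockIndex, finSumFinEquiv]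

theorem radiiBCFG_submatrix_blockIndex :
    radiiBCFG.submatrix blockIndex blockIndex =
      Matrix.fromBlocks
        ((cc 9)⁻¹ • !![b, c; c, -b]) ((-(cc 3)⁻¹) • !![d, a; -a, d])
        ((cc 3)⁻¹ • !![b, c; c, -b]) ((cc 9)⁻¹ • !![d, a; -a, d]) := by
  ext (i | i) (j | j) <;> fin_cases i <;> fin_cases j <;>
    simp [radiiBCFG, r1, r2, r3, r4, r5, r6, r7, r8, div_eq_inv_mul, blockIndex, finSumFinEquiv]

theorem det_radiiADEH :
    radiiADEH.det =
      ((cc 9)⁻¹ ^ 2 + (cc 3)⁻¹ ^ 2) ^ 2 * (a ^ 2 + d ^ 2) * (b ^ 2 + c ^ 2) := by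
  rw [← Matrix.det_submatrix_equiv_self blockIndex, radiiADEH_submatrix_blockIndex,
    det_fromBlocks_smul, Matrix.det_fin_two_of, Matrix.det_fin_two_of, Fintype.card_fin]
  ring

theorem det_radiiBCFG : radiiBCFG.det = -radiiADEH.det := by
  rw [det_radiiADEH, ← Matrix.det_submatrix_equiv_self blockIndex, radiiBCFG_submatrix_blockIndex,
    det_fromBlocks_smul, Matrix.det_fin_two_of, Matrix.det_fin_two_of, Fintype.card_fin]
  ring

theorem det_radiiADEH_pos : 0 < radiiADEH.det := by
  have ha := a_pos
  have hb := b_pos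
  have hcc : 0 < cc 9 := cc_pos (by norm_num)
  rw [det_radiiADEH]
  positivity

theorem linearIndependent_radiiADEH : LinearIndependent ℝ radiiADEH :=
  Matrix.linearIndependent_rows_of_det_ne_zero det_radiiADEH_pos.ne'

theorem linearIndependent_radiiBCFG : LinearIndependent ℝ radiiBCFG :=
  Matrix.linearIndependent_rows_of_det_ne_zero
    (det_radiiBCFG ▸ neg_ne_zero.2 det_radiiADEH_pos.ne')

end Radii

theorem vectors_ADEH_eq (n : Fin 30) :
    ![A n, D n, E n, H n] = fun j i => radiiADEH j i • phaseADEH n i := by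
  ext j i
  fin_cases j <;> fin_cases i <;> simp [A, D, E, H, radiiADEH, phaseADEH]

theorem vectors_BCFG_eq (n : Fin 30) :
    ![B n, C n, F n, G n] = fun j i => radiiBCFG j i • phaseBCFG n i := by
  ext j i
  fin_cases j <;> fin_cases i <;> simp [B, C, F, G, radiiBCFG, phaseBCFG]

theorem linearIndependent_vectors (n : Fin 30) :
    LinearIndependent ℝ ![A n, B n, C n, D n, E n, F n, G n, H n] := by
  let regroup : Fin 8 → Fin 4 ⊕ Fin 4 :=
    ![.inl 0, .inr 0, .inr 1, .inl 1, .inl 2, .inr 2, .inr 3, .inl 3]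
  have regroup_injective : Function.Injective regroup := by decide
  have hgrouped :
      LinearIndependent ℝ (Sum.elim ![A n, D n, E n, H n] ![B n, C n, F n, G n]) := by
    rw [vectors_ADEH_eq, vectors_BCFG_eq]
    exact linearIndependent_sumElim_smul (linearIndependent_phases n)
      linearIndependent_radiiADEH linearIndependent_radiiBCFG
  convert hgrouped.comp regroup regroup_injective using 1
  ext1 j
  fin_cases j <;> rfl

theorem span_vectors_eq_top (n : Fin 30) :
    Submodule.span ℝ (Set.range ![A n, B n, C n, D n, E n, F n, G n, H n]) = ⊤ := by
  apply (linearIndependent_vectors n).span_eq_top_of_card_eq_finrank'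
  simp [Module.finrank_pi_fintype, Complex.finrank_real_complex]

theorem range_vectors_subset_S (n : Fin 30) :
    Set.range ![A n, B n, C n, D n, E n, F n, G n, H n] ⊆ S := by
  rintro _ ⟨j, rfl⟩
  refine ⟨n, ?_⟩
  fin_cases j <;> simp

/-- for each n the eight vectors are linearly independent over ℝ and
span ℂ⁴ as a real vector space; in particular S spans ℂ⁴ over ℝ. -/
theorem stmt12 :
    (∀ n : Fin 30,
      LinearIndependent ℝ ![A n, B n, C n, D n, E n, F n, G n, H n] ∧
      Submodule.span ℝ (Set.range ![A n, B n, C n, D n, E n, F n, G n, H n]) = ⊤) ∧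
    Submodule.span ℝ S = ⊤ := by
  refine ⟨fun n => ⟨linearIndependent_vectors n, span_vectors_eq_top n⟩, ?_⟩
  rw [eq_top_iff, ← span_vectors_eq_top 0]
  exact Submodule.span_mono (range_vectors_subset_S 0)

end Triacontagonal
end
end
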